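/- For every positive integer n and every integer k with 1 ≤ k ≤ n−1, the coefficient of t^k in N_n(t) := N_{nn}(t) equals k(n−k)·C(2n+2, 2k+1)/(4n+2); equivalently, (4n+2) times the coefficient of t^k in N_n(t) equals k(n−k)·C(2n+2, 2k+1). (Theorem 4.1, explicit coefficient formula.) -/

import Mathlib

open Finset

/-- The polynomial `W_{pq}(t) = Σ_{k=0}^{min(p,q)-1} C(p-1,k) C(q-1,k) t^k`. -/
noncomputable def W (p q : ℕ) : Polynomial ℤ :=
  ∑ k ∈ Finset.range (min p q),
    Polynomial.C (((p - 1).choose k : ℤ) * ((q - 1).choose k : ℤ)) * Polynomial.X ^ k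

/-!
Let `c = 1 + (1 - t) x`. On the diagonals `p - q = d` the recursion becomes a forced three-term
recurrence, whose homogeneous form is `c F_d = F_{d-1} + x F_{d+1}`, for power series in `x`, closed
up at `d = 0` by the symmetry `p ↔ q`; it determines the series because `c` is a unit and every step
towards larger `d` gains a factor `x`. The diagonal series `V_d` of `W` solve the unforced
recurrence, the absolute value in the forcing term becomes the factor `d`, and the diagonal series
of `N` are `V_d` times a quadratic polynomial in `d`. For `d = 0` this yields
`∑ N_n x^n = 2 t x² / (c² - 4 x)²`.

The zeros of `c² - 4 x` are the inverses of `(1 ± √t)²`, so the same double poles arise from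
`(1 + √t)^(2n) = e_n(t) + √t o_n(t)`. This gives `8 N_n = (2n + 2) e_n - o_{n+1}`, whose right-hand
side has explicit coefficients.
-/

section KernelRecurrence

open PowerSeries

theorem eq_zero_of_kernel_recurrence {R : Type*} [CommSemiring R] {c : R⟦X⟧} {F : ℕ → R⟦X⟧}
    (hc : IsUnit c) (b : R⟦X⟧)
    (hF : ∀ d, c * F (d + 1) = F d + X * F (d + 2)) (hF₀ : c * F 0 = X * (b * F 1)) (d : ℕ) :
    F d = 0 := by
  have X_pow_dvd (n : ℕ) : ∀ d, X ^ n ∣ F d := by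
    induction n with
    | zero => simp
    | succ n ihn =>
      have X_pow_succ_dvd (e : R⟦X⟧) (d : ℕ) : X ^ (n + 1) ∣ X * (e * F d) := by
        rw [pow_succ']
        exact mul_dvd_mul_left X ((ihn d).mul_left e)
      intro d
      rw [← hc.dvd_mul_left]
      induction d with
      | zero => exact hF₀ ▸ X_pow_succ_dvd b 1
      | succ d ihd =>
        rw [hF]
        exact (hc.dvd_mul_left.1 ihd).add (by simpa using X_pow_succ_dvd 1 (d + 2))
  ext n
  exact X_pow_dvd_iff.1 (X_pow_dvd (n + 1) d) n n.lt_succ_self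

variable {R : Type*} [CommRing R] {c τ : R⟦X⟧} {V M : ℕ → R⟦X⟧}

theorem mul_sub_X_mul_of_kernel_recurrence (hc : IsUnit c)
    (hV : ∀ d, c * V (d + 1) = V d + X * V (d + 2)) (hV₀ : c * V 0 = 1 + 2 * X * V 1) (d : ℕ) :
    V 0 * (V d - X * V (d + 2)) = V (d + 1) := by
  rw [← sub_eq_zero]
  refine eq_zero_of_kernel_recurrence (F := fun d ↦ V 0 * (V d - X * V (d + 2)) - V (d + 1))
    hc 1 (fun d ↦ ?_) ?_ d
  · linear_combination V 0 * hV d - V 0 * X * hV (d + 2) - hV (d + 1)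
  · linear_combination V 0 * hV₀ - V 0 * X * hV 1 - hV 0

theorem discrim_mul_sq_of_kernel_recurrence (hc : IsUnit c)
    (hV : ∀ d, c * V (d + 1) = V d + X * V (d + 2)) (hV₀ : c * V 0 = 1 + 2 * X * V 1) :
    (c ^ 2 - 4 * X) * V 0 ^ 2 = 1 := by
  linear_combination (c * V 0 + 1) * hV₀ + 2 * X * V 0 * hV 0
    - 2 * X * mul_sub_X_mul_of_kernel_recurrence hc hV hV₀ 0

-- The forcing is built from a solution `V` of the unforced recurrence, so, as for a resonant
-- equation, one looks for `M d` as `V d` times a quadratic polynomial in `d`.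
theorem two_mul_eq_of_forced_kernel_recurrence (hc : IsUnit c)
    (hV : ∀ d, c * V (d + 1) = V d + X * V (d + 2)) (hV₀ : c * V 0 = 1 + 2 * X * V 1)
    (hM : ∀ d, c * M (d + 1) = M d + X * M (d + 2) + X * (τ * (((d + 1 : ℕ) : R⟦X⟧) * V (d + 1))))
    (hM₀ : c * M 0 = 2 * X * M 1) (d : ℕ) :
    2 * M d = τ * X * V 0 * V d * (4 * X * V 0 ^ 2 + c * V 0 * (d : R⟦X⟧) + (d : R⟦X⟧) ^ 2) := by
  have wronskian := mul_sub_X_mul_of_kernel_recurrence hc hV hV₀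
  have disc := discrim_mul_sq_of_kernel_recurrence hc hV hV₀
  rw [← sub_eq_zero]
  refine eq_zero_of_kernel_recurrence (F := fun d : ℕ ↦
    2 * M d - τ * X * V 0 * V d * (4 * X * V 0 ^ 2 + c * V 0 * (d : R⟦X⟧) + (d : R⟦X⟧) ^ 2))
    hc 2 (fun d ↦ ?_) ?_ d
  · have hMd := hM d
    push_cast at hMd ⊢
    linear_combination 2 * hMd
      - τ * X * V 0 * (4 * X * V 0 ^ 2 + c * V 0 * (d + 1) + (d + 1) ^ 2 + 1) * hV d
      - τ * X * (c * V 0 + 2 * (d + 1)) * wronskian d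
  · push_cast
    linear_combination 2 * hM₀
      + τ * X * V 0 * (disc - (4 * X * V 0 ^ 2 + c * V 0 + 1) * hV₀)

theorem discrim_sq_mul_of_forced_kernel_recurrence (hc : IsUnit c)
    (hV : ∀ d, c * V (d + 1) = V d + X * V (d + 2)) (hV₀ : c * V 0 = 1 + 2 * X * V 1)
    (hM : ∀ d, c * M (d + 1) = M d + X * M (d + 2) + X * (τ * (((d + 1 : ℕ) : R⟦X⟧) * V (d + 1))))
    (hM₀ : c * M 0 = 2 * X * M 1) :
    (c ^ 2 - 4 * X) ^ 2 * (2 * M 0) = 4 * τ * X ^ 2 := by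
  have disc := discrim_mul_sq_of_kernel_recurrence hc hV hV₀
  have hM_zero := two_mul_eq_of_forced_kernel_recurrence hc hV hV₀ hM hM₀ 0
  calc (c ^ 2 - 4 * X) ^ 2 * (2 * M 0)
      = 4 * τ * X ^ 2 * ((c ^ 2 - 4 * X) * V 0 ^ 2) ^ 2 := by
        rw [hM_zero]; push_cast; ring
    _ = 4 * τ * X ^ 2 := by rw [disc]; ring

end KernelRecurrence

section PascalRecurrence

open PowerSeries

variable {R : Type*} [CommRing R] {a t : R} {f s w : ℕ → ℕ → R}

/-- The Pascal-type recurrence of a two-dimensional array `f` with weight `-a` on the diagonal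
step and forcing term `s`; the array `s` is indexed by the lower left corner of each cell. -/
def PascalRec (a : R) (f s : ℕ → ℕ → R) : Prop :=
  ∀ p q, f (p + 1) (q + 1) = f p (q + 1) + f (p + 1) q - a * f p q + s p q

/-- The generating function of the entries of `f` on the `d`-th diagonal below the main one. -/
noncomputable def diagonalSeries (f : ℕ → ℕ → R) (d : ℕ) : R⟦X⟧ :=
  mk fun n ↦ f (n + d) n

/-- The coefficient `c` of the kernel `X z² - c z + 1` of the recurrence `PascalRec a`: a geometric
sequence of diagonal series `z ^ d` solves the unforced recurrence when `z` is a root. -/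
noncomputable def kernelCoeff (a : R) : R⟦X⟧ :=
  1 + C a * X

theorem isUnit_kernelCoeff (a : R) : IsUnit (kernelCoeff a) := by
  simp [isUnit_iff_constantCoeff, kernelCoeff]

theorem isUnit_discrim (a : R) : IsUnit (kernelCoeff a ^ 2 - 4 * X) := by
  simp [isUnit_iff_constantCoeff, kernelCoeff]

theorem kernelCoeff_mul (a : R) (u : R⟦X⟧) : kernelCoeff a * u = u + X * (C a * u) := by
  rw [kernelCoeff]; ring

theorem PascalRec.apply_comm (h : PascalRec a f s) (hs : ∀ p q, s p q = s q p)
    (h₀ : ∀ p, f p 0 = f 0 p) (p q : ℕ) : f p q = f q p := by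
  induction p generalizing q with
  | zero => exact (h₀ q).symm
  | succ p ihp =>
    induction q with
    | zero => exact h₀ (p + 1)
    | succ q ihq =>
      rw [h p q, h q p, ihp (q + 1), ihp q, ihq, hs p q]
      ring

theorem PascalRec.kernelCoeff_mul_diagonalSeries_succ (h : PascalRec a f s)
    (h₀ : ∀ p, f (p + 1) 0 = f p 0) (d : ℕ) :
    kernelCoeff a * diagonalSeries f (d + 1) =
      diagonalSeries f d + X * diagonalSeries f (d + 2) + X * diagonalSeries s (d + 1) := by
  rw [kernelCoeff_mul]
  ext (_ | n)
  · simp [diagonalSeries, h₀]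
  · simp only [map_add, coeff_succ_X_mul, coeff_C_mul, diagonalSeries, coeff_mk]
    rw [show n + 1 + (d + 1) = n + (d + 1) + 1 by ring, h, show n + 1 + d = n + (d + 1) by ring]
    ring_nf

theorem PascalRec.kernelCoeff_mul_diagonalSeries_zero (h : PascalRec a f s)
    (hf : ∀ p q, f p q = f q p) :
    kernelCoeff a * diagonalSeries f 0 =
      C (f 0 0) + 2 * X * diagonalSeries f 1 + X * diagonalSeries s 0 := by
  rw [kernelCoeff_mul, mul_assoc, mul_left_comm, two_mul]
  ext (_ | n)
  · simp [diagonalSeries]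
  · simp only [map_add, coeff_succ_X_mul, coeff_C_mul, diagonalSeries, coeff_mk, coeff_succ_C,
      add_zero]
    rw [h, hf n (n + 1)]
    ring

theorem diagonalSeries_abs_sub_mul (t : R) (w : ℕ → ℕ → R) (d : ℕ) :
    diagonalSeries (fun p q ↦ |(p : ℤ) - q| • (t * w p q)) d =
      C t * (d * diagonalSeries w d) := by
  ext n
  rw [← map_natCast (C (R := R)), coeff_C_mul, coeff_C_mul]
  simp [diagonalSeries, mul_left_comm]

theorem discrim_sq_mul_diagonalSeries (hw : PascalRec a w 0) (hw₁ : ∀ p, w p 0 = 1)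
    (hw_symm : ∀ p q, w p q = w q p)
    (hf : PascalRec a f fun p q ↦ |(p : ℤ) - q| • (t * w p q))
    (hf_left : ∀ q, f 0 q = 0) (hf_right : ∀ p, f p 0 = 0) :
    (kernelCoeff a ^ 2 - 4 * X) ^ 2 * (2 * diagonalSeries f 0) = 4 * C t * X ^ 2 := by
  have hf_symm : ∀ p q, f p q = f q p :=
    hf.apply_comm (fun p q ↦ by rw [abs_sub_comm, hw_symm]) fun p ↦ by rw [hf_left, hf_right]
  have diagonalSeries_zero (d : ℕ) : diagonalSeries (0 : ℕ → ℕ → R) d = 0 := rfl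
  refine discrim_sq_mul_of_forced_kernel_recurrence (V := diagonalSeries w)
    (M := diagonalSeries f) (isUnit_kernelCoeff a) (fun d ↦ ?_) ?_ (fun d ↦ ?_) ?_
  · simpa [diagonalSeries_zero] using
      hw.kernelCoeff_mul_diagonalSeries_succ (fun p ↦ by rw [hw₁, hw₁]) d
  · simpa [diagonalSeries_zero, hw₁] using hw.kernelCoeff_mul_diagonalSeries_zero hw_symm
  · simpa only [diagonalSeries_abs_sub_mul] using
      hf.kernelCoeff_mul_diagonalSeries_succ (fun p ↦ by rw [hf_right, hf_right]) d
  · simpa only [diagonalSeries_abs_sub_mul, hf_left, map_zero, Nat.cast_zero, zero_mul, mul_zero,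
      zero_add, add_zero] using hf.kernelCoeff_mul_diagonalSeries_zero hf_symm

end PascalRecurrence

section BinomialPolynomials

open Polynomial

theorem coeff_sum_range_C_mul_X_pow {R : Type*} [Semiring R] {n : ℕ} {u : ℕ → R}
    (hu : ∀ k, n ≤ k → u k = 0) (k : ℕ) : (∑ i ∈ range n, C (u i) * X ^ i).coeff k = u k := by
  simpa [finsetSum_coeff, coeff_X_pow] using fun h ↦ (hu k h).symm

theorem coeff_W_succ_succ (p q k : ℕ) :
    (W (p + 1) (q + 1)).coeff k = p.choose k * q.choose k := by
  refine coeff_sum_range_C_mul_X_pow (u := fun k ↦ (p.choose k * q.choose k : ℤ)) (fun k hk ↦ ?_) k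
  rcases min_le_iff.1 hk with h | h <;> simp [Nat.choose_eq_zero_of_lt h]

theorem W_comm (p q : ℕ) : W (p + 1) (q + 1) = W (q + 1) (p + 1) := by
  ext k
  rw [coeff_W_succ_succ, coeff_W_succ_succ, mul_comm]

theorem W_succ_one (p : ℕ) : W (p + 1) 1 = 1 := by
  simp [W]

theorem pascalRec_W : PascalRec (1 - X) (fun p q ↦ W (p + 1) (q + 1)) 0 := by
  intro p q
  ext (_ | k)
  · simp [sub_mul, coeff_W_succ_succ]
  · simp only [Pi.zero_apply, add_zero, sub_mul, one_mul, coeff_add, coeff_sub, coeff_X_mul,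
      coeff_W_succ_succ, Nat.choose_succ_succ]
    push_cast
    ring

/-- The even part `e_n` in the splitting `(1 + x) ^ (2 * n) = e_n(x²) + x o_n(x²)`. -/
noncomputable def evenBinomialPoly (n : ℕ) : ℤ[X] :=
  ∑ k ∈ range (n + 1), C ((2 * n).choose (2 * k) : ℤ) * X ^ k

/-- The odd part `o_n` in the splitting `(1 + x) ^ (2 * n) = e_n(x²) + x o_n(x²)`. -/
noncomputable def oddBinomialPoly (n : ℕ) : ℤ[X] :=
  ∑ k ∈ range n, C ((2 * n).choose (2 * k + 1) : ℤ) * X ^ k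

theorem coeff_evenBinomialPoly (n k : ℕ) :
    (evenBinomialPoly n).coeff k = (2 * n).choose (2 * k) :=
  coeff_sum_range_C_mul_X_pow
    (fun k hk ↦ by rw [Nat.choose_eq_zero_of_lt (by lia), Nat.cast_zero]) k

theorem coeff_oddBinomialPoly (n k : ℕ) :
    (oddBinomialPoly n).coeff k = (2 * n).choose (2 * k + 1) :=
  coeff_sum_range_C_mul_X_pow
    (fun k hk ↦ by rw [Nat.choose_eq_zero_of_lt (by lia), Nat.cast_zero]) k

theorem evenBinomialPoly_succ (n : ℕ) :
    evenBinomialPoly (n + 1) = (1 + X) * evenBinomialPoly n + 2 * (X * oddBinomialPoly n) := by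
  ext (_ | k)
  · simp [add_mul, coeff_evenBinomialPoly]
  · simp only [two_mul (X * _), add_mul, one_mul, coeff_add, coeff_X_mul, coeff_evenBinomialPoly,
      coeff_oddBinomialPoly, mul_add, mul_one, Nat.choose_succ_succ]
    push_cast
    ring

theorem oddBinomialPoly_succ (n : ℕ) :
    oddBinomialPoly (n + 1) = 2 * evenBinomialPoly n + (1 + X) * oddBinomialPoly n := by
  ext (_ | k)
  · simp [mul_add, add_mul, coeff_evenBinomialPoly, coeff_oddBinomialPoly, add_comm]
  · simp only [two_mul (evenBinomialPoly _), add_mul, one_mul, coeff_add, coeff_X_mul,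
      coeff_evenBinomialPoly, coeff_oddBinomialPoly, mul_add, mul_one, Nat.choose_succ_succ]
    push_cast
    ring

theorem evenBinomialPoly_zero : evenBinomialPoly 0 = 1 := by
  simp [evenBinomialPoly]

theorem oddBinomialPoly_zero : oddBinomialPoly 0 = 0 := by
  simp [oddBinomialPoly]

end BinomialPolynomials

section ClosedForm

open PowerSeries

theorem one_sub_add_mul_mk {R : Type*} [CommRing R] (α β : R) (u : ℕ → R) :
    (1 - C α * X + C β * X ^ 2) * PowerSeries.mk u =
      C (u 0) + C (u 1 - α * u 0) * X
        + X ^ 2 * PowerSeries.mk fun n ↦ u (n + 2) - α * u (n + 1) + β * u n := by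
  calc (1 - C α * X + C β * X ^ 2) * PowerSeries.mk u
      = PowerSeries.mk u + X * (X * (C β * PowerSeries.mk u) - C α * PowerSeries.mk u) := by ring
    _ = C (u 0) + X * (C (u 1 - α * u 0)
          + X * PowerSeries.mk fun n ↦ u (n + 2) - α * u (n + 1) + β * u n) := by
        ext (_ | _ | n)
        · simp
        · simp [coeff_succ_X_mul, coeff_succ_C, sub_eq_add_neg]
        · simp only [map_add, map_sub, coeff_succ_X_mul, coeff_C_mul, coeff_mk, coeff_succ_C]
          ring
    _ = _ := by ring

theorem discrim_kernelCoeff_one_sub {R : Type*} [CommRing R] (t : R) :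
    kernelCoeff (1 - t) ^ 2 - 4 * X = 1 - C (2 * (1 + t)) * X + C ((1 - t) ^ 2) * X ^ 2 := by
  simp only [kernelCoeff, map_mul, map_add, map_sub, map_pow, map_one, map_ofNat]
  ring

theorem discrim_mul_mk_oddBinomialPoly :
    (kernelCoeff (1 - Polynomial.X) ^ 2 - 4 * X) *
      PowerSeries.mk (fun n ↦ oddBinomialPoly (n + 1)) = 2 := by
  have recurrence (n : ℕ) : oddBinomialPoly (n + 2 + 1)
      - 2 * (1 + Polynomial.X) * oddBinomialPoly (n + 1 + 1)
      + (1 - Polynomial.X) ^ 2 * oddBinomialPoly (n + 1) = 0 := by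
    simp only [oddBinomialPoly_succ, evenBinomialPoly_succ]
    ring
  have initial :
      oddBinomialPoly (1 + 1) - 2 * (1 + Polynomial.X) * oddBinomialPoly (0 + 1) = 0 := by
    simp only [oddBinomialPoly_succ, evenBinomialPoly_succ, oddBinomialPoly_zero,
      evenBinomialPoly_zero]
    ring
  have mk_zero : (PowerSeries.mk fun _ ↦ 0 : (Polynomial ℤ)⟦X⟧) = 0 := rfl
  rw [discrim_kernelCoeff_one_sub, one_sub_add_mul_mk]
  simp only [recurrence, initial, mk_zero]
  simp [oddBinomialPoly_succ, oddBinomialPoly_zero, evenBinomialPoly_zero, map_ofNat]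

theorem discrim_mul_mk_evenBinomialPoly_sub :
    (kernelCoeff (1 - Polynomial.X) ^ 2 - 4 * X) * PowerSeries.mk
        (fun n ↦ (2 * n + 2) * evenBinomialPoly n - oddBinomialPoly (n + 1)) =
      X ^ 2 * (C (8 * Polynomial.X) * PowerSeries.mk (fun n ↦ oddBinomialPoly (n + 1))) := by
  set u : ℕ → Polynomial ℤ :=
    fun n ↦ (2 * n + 2) * evenBinomialPoly n - oddBinomialPoly (n + 1) with hu
  have recurrence (n : ℕ) : u (n + 2) - 2 * (1 + Polynomial.X) * u (n + 1)
      + (1 - Polynomial.X) ^ 2 * u n = 8 * Polynomial.X * oddBinomialPoly (n + 1) := by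
    simp only [hu, oddBinomialPoly_succ, evenBinomialPoly_succ]
    push_cast
    ring
  have initial_zero : u 0 = 0 := by
    simp [hu, oddBinomialPoly_succ, oddBinomialPoly_zero, evenBinomialPoly_zero]
  have initial_one : u 1 = 0 := by
    simp only [hu, oddBinomialPoly_succ, evenBinomialPoly_succ, oddBinomialPoly_zero,
      evenBinomialPoly_zero]
    push_cast
    ring
  rw [discrim_kernelCoeff_one_sub, one_sub_add_mul_mk, initial_one, initial_zero]
  simp only [recurrence, mul_zero, sub_zero, map_zero, zero_mul, add_zero, zero_add]
  congr 1
  ext1 n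
  rw [coeff_C_mul, coeff_mk, coeff_mk]

theorem eight_mul_diagonal {N : ℕ → ℕ → Polynomial ℤ}
    (hN : PascalRec (1 - Polynomial.X) N fun p q ↦
      |(p : ℤ) - q| • (Polynomial.X * W (p + 1) (q + 1)))
    (hN_left : ∀ q, N 0 q = 0) (hN_right : ∀ p, N p 0 = 0) (n : ℕ) :
    8 * N n n = (2 * n + 2) * evenBinomialPoly n - oddBinomialPoly (n + 1) := by
  have hdiag := discrim_sq_mul_diagonalSeries pascalRec_W W_succ_one W_comm hN hN_left hN_right
  have heven := discrim_mul_mk_evenBinomialPoly_sub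
  rw [map_mul, map_ofNat] at heven
  have series_eq : 8 * diagonalSeries N 0 = PowerSeries.mk
      fun n : ℕ ↦ (2 * n + 2) * evenBinomialPoly n - oddBinomialPoly (n + 1) := by
    apply ((isUnit_discrim (1 - Polynomial.X)).pow 2).mul_left_cancel
    linear_combination 4 * hdiag
      - (kernelCoeff (1 - Polynomial.X) ^ 2 - 4 * X) * heven
      - 8 * X ^ 2 * C Polynomial.X * discrim_mul_mk_oddBinomialPoly
  rw [← map_ofNat (C : Polynomial ℤ →+* _)] at series_eq
  simpa [diagonalSeries] using congrArg (coeff n) series_eq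

theorem eight_mul_coeff_diagonal {N : ℕ → ℕ → Polynomial ℤ}
    (hN : PascalRec (1 - Polynomial.X) N fun p q ↦
      |(p : ℤ) - q| • (Polynomial.X * W (p + 1) (q + 1)))
    (hN_left : ∀ q, N 0 q = 0) (hN_right : ∀ p, N p 0 = 0) (n k : ℕ) :
    8 * (N n n).coeff k =
      (2 * n + 2) * (2 * n).choose (2 * k) - (2 * n + 2).choose (2 * k + 1) := by
  have hcoeff := congrArg (Polynomial.coeff · k) (eight_mul_diagonal hN hN_left hN_right n)
  have natCast_eq_C : (2 * n + 2 : Polynomial ℤ) = Polynomial.C (2 * n + 2 : ℤ) := by simp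
  rw [natCast_eq_C] at hcoeff
  simpa only [Polynomial.coeff_ofNat_mul, Polynomial.coeff_sub, Polynomial.coeff_C_mul,
    coeff_evenBinomialPoly, coeff_oddBinomialPoly, mul_add, mul_one] using hcoeff

end ClosedForm

theorem add_two_mul_add_one_mul_choose (k j : ℕ) :
    (k + j + 2) * (k + j + 1) * (k + j).choose k =
      (k + 1) * (j + 1) * (k + j + 2).choose (k + 1) := by
  have raise_top := Nat.choose_mul_succ_eq (k + j) k
  have raise_both := Nat.add_one_mul_choose_eq (k + j + 1) k
  rw [show k + j + 1 - k = j + 1 by lia] at raise_top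
  linear_combination (k + j + 2) * raise_top + (j + 1) * raise_both

/-- Theorem 4.1 (explicit coefficient formula): for `1 ≤ k ≤ n-1`, `(4n+2)` times the
coefficient of `t^k` in `N_n(t) = N_{nn}(t)` equals `k(n-k)·C(2n+2, 2k+1)`. -/
theorem Nn_coeff_formula (N : ℕ → ℕ → Polynomial ℤ)
    (h0q : ∀ q, N 0 q = 0) (hp0 : ∀ p, N p 0 = 0) (h11 : N 1 1 = 0)
    (hrec : ∀ p q : ℕ, 1 ≤ p → 1 ≤ q → ¬(p = 1 ∧ q = 1) →
      N p q = N (p - 1) q + N p (q - 1) - (1 - Polynomial.X) * N (p - 1) (q - 1)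
        + Polynomial.C (|(p : ℤ) - (q : ℤ)|) * Polynomial.X * W p q)
    (n : ℕ) (hn : 1 ≤ n) (k : ℕ) (hk1 : 1 ≤ k) (hk2 : k ≤ n - 1) :
    (4 * (n : ℤ) + 2) * (N n n).coeff k
      = (k : ℤ) * ((n : ℤ) - (k : ℤ)) * ((2 * n + 2).choose (2 * k + 1) : ℤ) := by
  have hN : PascalRec (1 - Polynomial.X) N fun p q ↦
      |(p : ℤ) - q| • (Polynomial.X * W (p + 1) (q + 1)) := by
    intro p q
    by_cases h : p = 0 ∧ q = 0
    · simp [h, h0q, hp0, h11]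
    · simpa [mul_assoc] using hrec (p + 1) (q + 1) (by lia) (by lia) (by lia)
  obtain ⟨j, rfl⟩ : ∃ j, n = k + j := Nat.exists_eq_add_of_le (by lia)
  have hcoeff := eight_mul_coeff_diagonal hN h0q hp0 (k + j) k
  have hchoose := add_two_mul_add_one_mul_choose (2 * k) (2 * j)
  rw [← mul_add] at hchoose
  zify at hchoose
  push_cast at hcoeff hchoose ⊢
  apply mul_left_cancel₀ (show (8 : ℤ) ≠ 0 by norm_num)
  linear_combination (4 * ((k : ℤ) + j) + 2) * hcoeff + 2 * hchoose
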